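/- arXiv:1907.12034 — 2 statements merged into one kernel-verified Lean document; each statement's English description precedes it below -/
import Mathlib

section
/- There exists a real constant c > 0 such that for every integer σ ≥ 9 and every integer n ≥ σ², there exists a word w over the alphabet Fin (σ+1) with w.length ≤ n and an integer m such that the number of minimal absent words of w having length exactly m is at least c · n · σ · (Real.log σ) / (Real.log n). -/
/-- The set of minimal absent words of a factor-closed language `L`. -/
def MAW {α : Type*} (L : Set (List α)) : Set (List α) :=
  {v | 2 ≤ v.length ∧ v ∉ L ∧ v.tail ∈ L ∧ v.dropLast ∈ L}

/-- The set of factors of a word `w`. -/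
def Factors {α : Type*} (w : List α) : Set (List α) := {u | u <:+: w}

theorem maw_aux_split {α : Type*} (h : α) (x : List α) (hx : h ∉ x) (t : List α) :
    ∀ s : List α, x <:+: s ++ h :: t → x <:+: s ∨ x <:+: t := by
  intro s hs
  obtain ⟨p, q, hpq⟩ := hs
  rw [List.append_eq_append_iff] at hpq
  rcases hpq with ⟨a, h1, h2⟩ | ⟨c, h1, h2⟩
  · left
    exact ⟨p, a, h1.symm⟩
  · rw [List.append_eq_append_iff] at h1
    rcases h1 with ⟨a, h3, h4⟩ | ⟨d, h3, h4⟩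
    · cases a with
      | nil =>
        simp at h4
        subst h4
        cases x with
        | nil => left; exact List.nil_infix
        | cons y ys => simp at h2; exact absurd (by simp [h2.1]) hx
      | cons y ys =>
        cases c with
        | nil => left; simp at h3 h4; exact ⟨p, [], by simp_all⟩
        | cons z zs =>
          simp at h2
          exact absurd (by rw [h4]; simp [h2.1]) hx
    · cases d with
      | nil =>
        simp at h4
        subst h4
        cases c with
        | nil => left; exact List.nil_infix
        | cons y ys => simp at h2; exact absurd (by simp [h2.1]) hx
      | cons y ys =>
        right
        subst h4
        simp at h2
        exact ⟨ys, q, by simp [h2.2]⟩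

theorem maw_aux_len {α : Type*} (h : α) (x : List α) (hx : h ∉ x) (k : ℕ)
    (L : List (List α)) :
    (∀ u ∈ L, u.length ≤ k) → ∀ u : List α, u.length ≤ k →
      x <:+: u ++ L.flatMap (fun u => h :: u) → x.length ≤ k := by
  induction L with
  | nil =>
    intro _ u hu hxu
    simp at hxu
    exact hxu.length_le.trans hu
  | cons v L ih =>
    intro hL u hu hxu
    rw [List.flatMap_cons, List.cons_append] at hxu
    rcases maw_aux_split h x hx _ _ hxu with h1 | h1
    · exact h1.length_le.trans hu
    · exact ih (fun u hu => hL u (List.mem_cons_of_mem _ hu)) v (hL v (by simp)) h1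

theorem maw_aux_mem {α : Type*} (h : α) (L : List (List α)) (u : List α) (hu : u ∈ L) :
    u <:+: L.flatMap (fun u => h :: u) := by
  obtain ⟨s, t, rfl⟩ := List.append_of_mem hu
  exact ⟨s.flatMap (fun u => h :: u) ++ [h], t.flatMap (fun u => h :: u), by simp⟩

/-- The combinatorial core: `M` centre words of length `l`, each extended on both sides. -/
theorem maw_aux_construct (σ l M : ℕ) (hM : M ≤ σ ^ l) :
    ∃ w : List (Fin (σ + 1)), w.length = 2 * σ * M * (l + 2) ∧
      σ ^ 2 * M ≤ ({v | v ∈ MAW (Factors w) ∧ v.length = l + 2}).ncard := by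
  obtain ⟨S, -, hS⟩ := Finset.exists_subset_card_eq
    (s := (Finset.univ : Finset (Fin l → Fin σ))) (n := M) (by simpa using hM)
  let e : (Fin l → Fin σ) → List (Fin (σ + 1)) := fun f => List.ofFn fun i => (f i).castSucc
  have he : ∀ f, (e f).length = l := fun f => by simp [e]
  have hlast : ∀ f, Fin.last σ ∉ e f := fun f => by
    simp only [e, List.mem_ofFn, not_exists]
    intro i; exact (Fin.castSucc_lt_last _).ne
  have hinj : Function.Injective e := fun f g hfg => by
    have := List.ofFn_injective hfg
    funext i
    exact Fin.castSucc_injective _ (congrFun this i)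
  let A : Finset (Fin σ × (Fin l → Fin σ)) := Finset.univ ×ˢ S
  let L : List (List (Fin (σ + 1))) :=
    A.toList.map (fun p => p.1.castSucc :: e p.2) ++
    A.toList.map (fun p => e p.2 ++ [p.1.castSucc])
  have hA : A.card = σ * M := by simp [A, hS]
  have hlen : ∀ u ∈ L, u.length = l + 1 := by
    intro u hu
    simp only [L, List.mem_append, List.mem_map] at hu
    rcases hu with ⟨p, -, rfl⟩ | ⟨p, -, rfl⟩ <;> simp [he]
  have hLl : L.length = 2 * (σ * M) := by simp [L, hA]; ring
  refine ⟨L.flatMap (fun u => Fin.last σ :: u), ?_, ?_⟩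
  · rw [List.length_flatMap]
    have : L.map (fun a => (Fin.last σ :: a).length) = L.map (fun _ => l + 2) := by
      apply List.map_congr_left
      intro u hu
      simp [hlen u hu]
    rw [this]
    simp [hLl]; ring
  · let F : (Fin σ × Fin σ) × (Fin l → Fin σ) → List (Fin (σ + 1)) :=
      fun p => p.1.1.castSucc :: (e p.2 ++ [p.1.2.castSucc])
    let B : Finset ((Fin σ × Fin σ) × (Fin l → Fin σ)) := Finset.univ ×ˢ S
    have hF : Function.Injective F := by
      rintro ⟨⟨a, b⟩, f⟩ ⟨⟨a', b'⟩, f'⟩ h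
      simp only [F, List.cons.injEq] at h
      obtain ⟨h1, h2⟩ := h
      obtain ⟨h3, h4⟩ := List.append_inj h2 (by simp [he])
      simp at h4 h1
      simp [h1, h4, hinj h3]
    have hB : (F '' (B : Set _)).ncard = σ ^ 2 * M := by
      rw [Set.ncard_image_of_injective _ hF, Set.ncard_coe_finset]
      simp only [B, Finset.card_product, Finset.card_univ, Fintype.card_prod, Fintype.card_fin, hS]; ring
    rw [← hB]
    apply Set.ncard_le_ncard
    · rintro _ ⟨⟨⟨a, b⟩, f⟩, hp, rfl⟩
      have hf : f ∈ S := by simpa [B] using hp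
      refine ⟨⟨?_, ?_, ?_, ?_⟩, ?_⟩
      · simp [F, he]
      · intro h
        have h' := maw_aux_len (Fin.last σ) (F ((a, b), f)) (by
          simp only [F, List.mem_cons, List.mem_append, not_or, List.not_mem_nil,
            not_false_eq_true, and_true]
          exact ⟨(Fin.castSucc_lt_last _).ne', hlast f, (Fin.castSucc_lt_last _).ne'⟩) (l + 1) L
          (fun u hu => (hlen u hu).le) [] (by simp) h
        simp [F, he] at h'
      · apply maw_aux_mem
        simp only [L, List.mem_append, List.mem_map]
        right
        exact ⟨(b, f), by simp [A, hf], by simp [F]⟩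
      · apply maw_aux_mem
        simp only [L, List.mem_append, List.mem_map]
        left
        refine ⟨(a, f), by simp [A, hf], ?_⟩
        simp only [F]
        rw [← List.cons_append, List.dropLast_concat]
      · simp [F, he]
    · exact (List.finite_length_eq (Fin (σ + 1)) (l + 2)).subset fun v hv => hv.2

theorem maw_aux_pow (k : ℕ) : 2 * (k + 4) ≤ 9 ^ (k + 1) := by
  induction k with
  | zero => norm_num
  | succ k ih => rw [pow_succ]; omega

/-- There is a constant `c > 0` such that for every `σ ≥ 9` and `n ≥ σ²` there is a word
over `Fin (σ+1)` of length at most `n` having `Ω(n·σ/log_σ n)` minimal absent words all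
of the same length. -/
theorem maw_same_length_lower_bound :
    ∃ c : ℝ, 0 < c ∧ ∀ σ n : ℕ, 9 ≤ σ → σ ^ 2 ≤ n →
      ∃ w : List (Fin (σ + 1)), w.length ≤ n ∧
        ∃ m : ℕ,
          c * n * σ * Real.log σ / Real.log n ≤
            ({v | v ∈ MAW (Factors w) ∧ v.length = m}).ncard := by
  refine ⟨1 / 8, by norm_num, ?_⟩
  intro σ n hσ hn
  have hn0 : n ≠ 0 := by
    rintro rfl
    have : 0 < σ ^ 2 := by positivity
    omega
  obtain ⟨k, hk⟩ : ∃ k, Nat.log σ n = k + 2 := by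
    have : 2 ≤ Nat.log σ n := Nat.le_log_of_pow_le (by omega) hn
    exact ⟨Nat.log σ n - 2, by omega⟩
  have hlow : σ ^ (k + 2) ≤ n := hk ▸ Nat.pow_log_le_self σ hn0
  have hup : n < σ ^ (k + 3) := by
    have := Nat.lt_pow_succ_log_self (b := σ) (by omega) n
    rwa [hk] at this
  set D := 2 * σ * (k + 4) with hD
  have hDpos : 0 < D := by positivity
  have hDn : D ≤ n := by
    refine le_trans ?_ hlow
    have h1 := (maw_aux_pow k).trans (Nat.pow_le_pow_left hσ (k + 1))
    calc D = σ * (2 * (k + 4)) := by rw [hD]; ring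
      _ ≤ σ * σ ^ (k + 1) := Nat.mul_le_mul_left _ h1
      _ = σ ^ (k + 2) := by ring
  set M := n / D with hMdef
  have hMD : M * D ≤ n := Nat.div_mul_le_self n D
  have hM1 : 1 ≤ M := Nat.div_pos hDn hDpos
  have hn2 : n ≤ 2 * (M * D) := by
    have := Nat.lt_div_mul_add (a := n) hDpos
    rw [← hMdef] at this
    nlinarith
  have hMs : M ≤ σ ^ (k + 2) := by
    have h1 : M * σ < σ ^ (k + 2) * σ := by
      calc M * σ ≤ M * D := Nat.mul_le_mul_left _ (by rw [hD]; nlinarith)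
        _ ≤ n := hMD
        _ < σ ^ (k + 3) := hup
        _ = _ := by ring
    exact (lt_of_mul_lt_mul_right h1 (Nat.zero_le _)).le
  obtain ⟨w, hw, hc⟩ := maw_aux_construct σ (k + 2) M hMs
  refine ⟨w, ?_, k + 2 + 2, ?_⟩
  · rw [hw]
    refine le_trans (le_of_eq ?_) hMD
    rw [hD]; ring
  · refine le_trans ?_ (Nat.cast_le.mpr hc)
    have hσ9 : (9 : ℝ) ≤ σ := by exact_mod_cast hσ
    have hls : 0 < Real.log σ := Real.log_pos (by linarith)
    have hlogn : ((k : ℝ) + 2) * Real.log σ ≤ Real.log n := by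
      have h1 : ((σ : ℝ) ^ (k + 2)) ≤ n := by exact_mod_cast hlow
      have h2 := Real.log_le_log (by positivity) h1
      rw [Real.log_pow] at h2
      push_cast at h2
      exact h2
    have hln : 0 < Real.log n := lt_of_lt_of_le (by positivity) hlogn
    rw [div_le_iff₀ hln]
    have hn2' : (n : ℝ) ≤ 2 * (M * (2 * σ * (k + 4))) := by
      have : n ≤ 2 * (M * (2 * σ * (k + 4))) := hn2
      exact_mod_cast this
    have h3 : (n : ℝ) ≤ 8 * (M * σ * (k + 2)) := by
      have : (0 : ℝ) ≤ M * σ * k := by positivity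
      nlinarith
    push_cast
    calc 1 / 8 * (n : ℝ) * σ * Real.log σ = (n : ℝ) * (1 / 8 * σ * Real.log σ) := by ring
      _ ≤ 8 * (M * σ * (k + 2)) * (1 / 8 * σ * Real.log σ) :=
          mul_le_mul_of_nonneg_right h3 (by positivity)
      _ = (σ : ℝ) ^ 2 * M * ((k + 2) * Real.log σ) := by ring
      _ ≤ (σ : ℝ) ^ 2 * M * Real.log n := mul_le_mul_of_nonneg_left hlogn (by positivity)
end

section
/- For all integers s ≥ 1 and N ≥ 1, setting n = (N+1)(s+1) + s·N, there exists a simple graph G on Fin n with G.IsTree and an edge labeling f : G.edgeSet → Fin (s+1) such that the set of minimal absent words of the path language L(G,f) has cardinality at least s³·N². -/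
/-- The path language of an edge-labeled graph: all words obtained as the sequences of
labels of the successive edges of walks that are paths (including trivial walks, which
contribute the empty word). -/
def pathLang {n σ : ℕ} (G : SimpleGraph (Fin n)) (f : G.edgeSet → Fin σ) :
    Set (List (Fin σ)) :=
  {l | ∃ (u v : Fin n) (p : G.Walk u v), p.IsPath ∧
    l = p.darts.map (fun d => f ⟨d.edge, d.edge_mem⟩)}

namespace MawTree

abbrev V (s N : ℕ) := (Fin (s + 1) × Fin (N + 1)) ⊕ (Fin s × Fin N)

/-- parent function (the root is its own parent) -/
def par {s N : ℕ} : V s N → V s N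
  | Sum.inl (_, ⟨0, _⟩) => Sum.inl (0, 0)
  | Sum.inl (b, ⟨k + 1, h⟩) => Sum.inl (b, ⟨k, by omega⟩)
  | Sum.inr (_, i) => Sum.inl (0, i.succ)

def lab {s N : ℕ} : V s N → Fin (s + 1)
  | Sum.inl (b, ⟨0, _⟩) => b
  | Sum.inl (_, ⟨_ + 1, _⟩) => 0
  | Sum.inr (x, _) => x.succ

def rk {s N : ℕ} : V s N → ℕ
  | Sum.inl (b, k) => k.val + (if b = 0 then 0 else 1)
  | Sum.inr (_, i) => i.val + 2

def root {s N : ℕ} : V s N := Sum.inl (0, 0)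

def GV (s N : ℕ) : SimpleGraph (V s N) := SimpleGraph.fromRel (fun u v => par u = v)

theorem rk_par {s N : ℕ} (v : V s N) (h : v ≠ root) : rk (par v) < rk v := by
  rcases v with ⟨b, ⟨_ | k, hk⟩⟩ | ⟨x, i⟩
  · have : b ≠ 0 := by
      rintro rfl; exact h rfl
    simp [par, rk, this]
  · simp [par, rk]
  · simp [par, rk]

theorem par_root {s N : ℕ} : par (root : V s N) = root := rfl

theorem par_ne {s N : ℕ} (v : V s N) (h : v ≠ root) : v ≠ par v := by
  intro h'
  have := rk_par v h
  rw [← h'] at this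
  omega

theorem adj_par {s N : ℕ} (v : V s N) (h : v ≠ root) : (GV s N).Adj v (par v) := by
  simp [GV, SimpleGraph.fromRel_adj, par_ne v h]

theorem adj_cases {s N : ℕ} {u v : V s N} (h : (GV s N).Adj u v) :
    (u ≠ root ∧ v = par u) ∨ (v ≠ root ∧ u = par v) := by
  rw [GV, SimpleGraph.fromRel_adj] at h
  obtain ⟨h1, h2 | h2⟩ := h
  · left; refine ⟨?_, h2.symm⟩
    rintro rfl; rw [par_root] at h2; exact h1 h2
  · right; refine ⟨?_, h2.symm⟩
    rintro rfl; rw [par_root] at h2; exact h1 h2.symm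

def g {s N : ℕ} : Sym2 (V s N) → Fin (s + 1) :=
  Sym2.lift ⟨fun u v => if rk u < rk v then lab v else if rk v < rk u then lab u else 0, by
    intro u v
    dsimp only
    split_ifs <;> first | rfl | omega⟩

theorem g_par {s N : ℕ} (v : V s N) (h : v ≠ root) : g s(v, par v) = lab v := by
  have := rk_par v h
  simp only [g, Sym2.lift_mk]
  rw [if_neg (by omega), if_pos this]

theorem g_par' {s N : ℕ} (v : V s N) (h : v ≠ root) : g s(par v, v) = lab v := by
  rw [Sym2.eq_swap, g_par v h]

theorem conn (s N : ℕ) : (GV s N).Connected := by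
  have key : ∀ m (v : V s N), rk v ≤ m → (GV s N).Reachable v root := by
    intro m
    induction m with
    | zero =>
      intro v hv
      by_cases h : v = root
      · rw [h]
      · have := rk_par v h; omega
    | succ m ih =>
      intro v hv
      by_cases h : v = root
      · rw [h]
      · have := rk_par v h
        exact (adj_par v h).reachable.trans (ih _ (by omega))
  have : Nonempty (V s N) := ⟨root⟩
  exact ⟨fun u v => (key _ u le_rfl).trans (key _ v le_rfl).symm⟩

theorem tree (s N : ℕ) : (GV s N).IsTree := by
  rw [SimpleGraph.isTree_iff_connected_and_card]
  refine ⟨conn s N, ?_⟩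
  have h1 : (GV s N).edgeSet = (fun v => s(v, par v)) '' {v : V s N | v ≠ root} := by
    ext e
    induction e with
    | _ u v =>
    simp only [SimpleGraph.mem_edgeSet, Set.mem_image, Set.mem_setOf_eq]
    constructor
    · intro h
      rcases adj_cases h with ⟨h1, h2⟩ | ⟨h1, h2⟩
      · exact ⟨u, h1, by rw [h2]⟩
      · exact ⟨v, h1, by rw [h2, Sym2.eq_swap]⟩
    · rintro ⟨w, hw, h⟩
      rw [← SimpleGraph.mem_edgeSet, ← h]
      exact adj_par w hw
  have h2 : Set.InjOn (fun v => s(v, par v)) {v : V s N | v ≠ root} := by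
    intro u hu v hv h
    simp only [Sym2.eq_iff] at h
    rcases h with h | ⟨h, h'⟩
    · exact h.1
    · have a := rk_par u hu
      have b := rk_par v hv
      rw [h'] at a; rw [← h] at b; omega
  have h3 : Nat.card (GV s N).edgeSet = ({v : V s N | v ≠ root}).ncard := by
    rw [h1, Nat.card_coe_set_eq, Set.ncard_image_of_injOn h2]
  rw [h3]
  have h4 : {v : V s N | v ≠ root} = {root}ᶜ := by ext; simp
  rw [h4, ← Set.ncard_add_ncard_compl {(root : V s N)}, Set.ncard_singleton, add_comm]

/-- path language on `V`. -/
def LV (s N : ℕ) : Set (List (Fin (s + 1))) :=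
  {l | ∃ (u v : V s N) (p : (GV s N).Walk u v), p.IsPath ∧ l = p.edges.map g}

theorem LV_reverse {s N : ℕ} {l : List (Fin (s + 1))} (h : l ∈ LV s N) : l.reverse ∈ LV s N := by
  obtain ⟨u, v, p, hp, rfl⟩ := h
  exact ⟨v, u, p.reverse, hp.reverse, by simp⟩

theorem chain_zero {s N : ℕ} (b : Fin (s + 1)) (hb : b ≠ 0) {w v : V s N}
    (q : (GV s N).Walk w v) : (∃ k, w = Sum.inl (b, k)) → root ∉ q.support →
    ∀ e ∈ q.edges, g e = 0 := by
  induction q with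
  | nil => simp
  | @cons w w' v h q ih =>
    rintro ⟨k, rfl⟩ hr e he
    simp only [SimpleGraph.Walk.support_cons, List.mem_cons, not_or] at hr
    have hw' : w' ≠ root := by
      rintro rfl; exact hr.2 q.start_mem_support
    have main : (∃ k, w' = Sum.inl (b, k)) ∧ g s(Sum.inl (b, k), w') = 0 := by
      rcases adj_cases h with ⟨h1, h2⟩ | ⟨h1, h2⟩
      · rcases k with ⟨_ | k, hk⟩
        · exact absurd h2 hw'
        · refine ⟨⟨⟨k, by omega⟩, h2⟩, ?_⟩
          rw [h2, g_par _ h1]; rfl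
      · rcases w' with ⟨b', ⟨_ | k', hk⟩⟩ | ⟨x, i⟩
        · simp [par] at h2; exact absurd h2.1 hb
        · have hbb : b = b' := by simp [par] at h2; exact h2.1
          subst hbb
          refine ⟨⟨_, rfl⟩, ?_⟩
          rw [h2, g_par' _ h1]; rfl
        · simp [par] at h2; exact absurd h2.1 hb
    rw [SimpleGraph.Walk.edges_cons, List.mem_cons] at he
    rcases he with rfl | he
    · exact main.2
    · exact ih main.1 hr.2 e he

theorem key_zero {s N : ℕ} {u v : V s N} (hu : u ≠ root) (hl : lab u ≠ 0)
    (q : (GV s N).Walk u v) (hq : par u ∉ q.support) : ∀ e ∈ q.edges, g e = 0 := by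
  rcases u with ⟨b, ⟨_ | k, hk⟩⟩ | ⟨x, i⟩
  · exact chain_zero b hl q ⟨_, rfl⟩ hq
  · exact absurd rfl hl
  · cases q with
    | nil => simp
    | @cons _ w _ h q =>
      exfalso
      rcases adj_cases h with ⟨h1, h2⟩ | ⟨h1, h2⟩
      · apply hq
        rw [← h2]; simp
      · rcases w with ⟨b', ⟨_ | k', hk⟩⟩ | ⟨x, i⟩ <;> simp [par] at h2

theorem split {s N : ℕ} {u v : V s N} (p : (GV s N).Walk u v) :
    ∀ (l₁ l₂ : List (Fin (s + 1))) (b : Fin (s + 1)), p.edges.map g = l₁ ++ b :: l₂ →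
    p.IsPath → ∃ (w w' : V s N) (q₁ : (GV s N).Walk u w) (_ : (GV s N).Adj w w')
      (q₂ : (GV s N).Walk w' v), q₁.edges.map g = l₁ ∧ q₂.edges.map g = l₂ ∧ g s(w, w') = b ∧
        w ∉ q₂.support ∧ w' ∉ q₁.support ∧ q₁.support ⊆ p.support ∧ q₂.support ⊆ p.support := by
  induction p with
  | nil => simp
  | @cons u u' v h p ih =>
    intro l₁ l₂ b he hp
    rw [SimpleGraph.Walk.cons_isPath_iff] at hp
    cases l₁ with
    | nil =>
      simp only [SimpleGraph.Walk.edges_cons, List.map_cons, List.nil_append,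
        List.cons.injEq] at he
      refine ⟨u, u', .nil, h, p, rfl, he.2, he.1, hp.2, ?_, ?_, ?_⟩
      · simpa using h.ne'
      · simp
      · simp
    | cons a l₁ =>
      simp only [SimpleGraph.Walk.edges_cons, List.map_cons, List.cons_append,
        List.cons.injEq] at he
      obtain ⟨w, w', q₁, hw, q₂, e1, e2, e3, n1, n2, s1, s2⟩ := ih l₁ l₂ b he.2 hp.1
      refine ⟨w, w', .cons h q₁, hw, q₂, ?_, e2, e3, n1, ?_, ?_, ?_⟩
      · simp [e1, he.1]
      · simp only [SimpleGraph.Walk.support_cons, List.mem_cons, not_or]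
        refine ⟨?_, n2⟩
        rintro rfl
        exact hp.2 (s2 q₂.start_mem_support)
      · simp only [SimpleGraph.Walk.support_cons]
        exact List.cons_subset_cons _ s1
      · simp only [SimpleGraph.Walk.support_cons]
        exact List.subset_cons_of_subset _ s2

theorem absent {s N : ℕ} (l₁ l₂ : List (Fin (s + 1))) (x b y : Fin (s + 1)) (hx : x ≠ 0)
    (hb : b ≠ 0) (hy : y ≠ 0) (h1 : x ∈ l₁) (h2 : y ∈ l₂) : l₁ ++ b :: l₂ ∉ LV s N := by
  rintro ⟨u, v, p, hp, he⟩
  obtain ⟨w, w', q₁, hw, q₂, e1, e2, e3, n1, n2, -, -⟩ := split p l₁ l₂ b he.symm hp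
  rw [← e1] at h1
  rw [← e2] at h2
  obtain ⟨ex, hex, rfl⟩ := List.mem_map.1 h1
  obtain ⟨ey, hey, rfl⟩ := List.mem_map.1 h2
  rcases adj_cases hw with ⟨r, rfl⟩ | ⟨r, rfl⟩
  · rw [g_par _ r] at e3
    exact hx (key_zero r (e3 ▸ hb) q₁.reverse (by simpa using n2) ex (by simpa using hex))
  · rw [g_par' _ r] at e3
    exact hy (key_zero r (e3 ▸ hb) q₂ n1 ey hey)

theorem up {s N : ℕ} (b : Fin (s + 1)) (j : ℕ) (hj : j < N + 1) :
    ∃ p : (GV s N).Walk (Sum.inl (b, ⟨j, hj⟩)) (Sum.inl (b, 0)), p.IsPath ∧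
      p.edges.map g = List.replicate j 0 ∧
      ∀ w ∈ p.support, ∃ k : Fin (N + 1), k.val ≤ j ∧ w = Sum.inl (b, k) := by
  induction j with
  | zero => exact ⟨.nil, by simp, by simp, by simp⟩
  | succ j ih =>
    obtain ⟨p, hp, he, hs⟩ := ih (by omega)
    have hr : (Sum.inl (b, ⟨j + 1, hj⟩) : V s N) ≠ root := by
      intro h0
      have h' := congrArg Fin.val (Prod.mk.inj (Sum.inl.inj h0)).2
      simp at h'
    have had : (GV s N).Adj (Sum.inl (b, ⟨j + 1, hj⟩)) (Sum.inl (b, ⟨j, by omega⟩)) :=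
      adj_par _ hr
    have hg : g s((Sum.inl (b, ⟨j + 1, hj⟩) : V s N), Sum.inl (b, ⟨j, by omega⟩)) = 0 :=
      g_par _ hr
    refine ⟨.cons had p, ?_, ?_, ?_⟩
    · refine hp.cons ?_
      intro h
      obtain ⟨k, hk, h⟩ := hs _ h
      have h' := congrArg Fin.val (Prod.mk.inj (Sum.inl.inj h)).2
      simp only at h'
      omega
    · rw [SimpleGraph.Walk.edges_cons, List.map_cons, he, List.replicate_succ, hg]
      try rfl
    · intro w hw
      rw [SimpleGraph.Walk.support_cons, List.mem_cons] at hw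
      rcases hw with rfl | hw
      · exact ⟨_, le_rfl, rfl⟩
      · obtain ⟨k, hk, h⟩ := hs _ hw
        exact ⟨k, by omega, h⟩

theorem mid {s N : ℕ} (b : Fin (s + 1)) (hb : b ≠ 0) (j : ℕ) (hj : j < N + 1)
    (i : ℕ) (hi : i < N + 1) :
    ∃ p : (GV s N).Walk (Sum.inl (0, ⟨i, hi⟩)) (Sum.inl (b, ⟨j, hj⟩)), p.IsPath ∧
      p.edges.map g = List.replicate i 0 ++ b :: List.replicate j 0 ∧
      ∀ w ∈ p.support, (∃ k : Fin (N + 1), k.val ≤ i ∧ w = Sum.inl (0, k)) ∨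
        ∃ k : Fin (N + 1), w = Sum.inl (b, k) := by
  induction i with
  | zero =>
    obtain ⟨p, hp, he, hs⟩ := up (s := s) b j hj
    have hr : (Sum.inl (b, 0) : V s N) ≠ root := by
      simp [root, hb]
    have had : (GV s N).Adj (Sum.inl (0, ⟨0, hi⟩)) (Sum.inl (b, 0)) := (adj_par _ hr).symm
    refine ⟨.cons had p.reverse, ?_, ?_, ?_⟩
    · refine hp.reverse.cons ?_
      intro h
      rw [SimpleGraph.Walk.support_reverse, List.mem_reverse] at h
      obtain ⟨k, hk, h⟩ := hs _ h
      simp at h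
      exact hb h.1.symm
    · rw [SimpleGraph.Walk.edges_cons, List.map_cons, SimpleGraph.Walk.edges_reverse,
        List.map_reverse, he]
      have : g s((Sum.inl (0, ⟨0, hi⟩) : V s N), Sum.inl (b, 0)) = b := g_par' _ hr
      rw [this]; simp
    · intro w hw
      rw [SimpleGraph.Walk.support_cons, List.mem_cons] at hw
      rcases hw with rfl | hw
      · exact Or.inl ⟨_, le_rfl, rfl⟩
      · rw [SimpleGraph.Walk.support_reverse, List.mem_reverse] at hw
        obtain ⟨k, hk, h⟩ := hs _ hw
        exact Or.inr ⟨k, h⟩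
  | succ i ih =>
    obtain ⟨p, hp, he, hs⟩ := ih (by omega)
    have hr : (Sum.inl (0, ⟨i + 1, hi⟩) : V s N) ≠ root := by
      simp [root, Fin.ext_iff]
    have had : (GV s N).Adj (Sum.inl (0, ⟨i + 1, hi⟩)) (Sum.inl (0, ⟨i, by omega⟩)) :=
      adj_par _ hr
    have hg : g s((Sum.inl (0, ⟨i + 1, hi⟩) : V s N), Sum.inl (0, ⟨i, by omega⟩)) = 0 :=
      g_par _ hr
    refine ⟨.cons had p, ?_, ?_, ?_⟩
    · refine hp.cons ?_
      intro h
      rcases hs _ h with ⟨k, hk, h⟩ | ⟨k, h⟩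
      · have h' := congrArg Fin.val (Prod.mk.inj (Sum.inl.inj h)).2
        simp only at h'
        omega
      · simp at h
        exact hb h.1.symm
    · rw [SimpleGraph.Walk.edges_cons, List.map_cons, he, List.replicate_succ, hg]
      try rfl
    · intro w hw
      rw [SimpleGraph.Walk.support_cons, List.mem_cons] at hw
      rcases hw with rfl | hw
      · exact Or.inl ⟨_, le_rfl, rfl⟩
      · rcases hs _ hw with ⟨k, hk, h⟩ | h
        · exact Or.inl ⟨k, by omega, h⟩
        · exact Or.inr h

theorem present {s N : ℕ} (x : Fin s) (b : Fin s) (i j : Fin N) :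
    x.succ :: (List.replicate (i.val + 1) 0 ++ b.succ :: List.replicate (j.val + 1) 0)
      ∈ LV s N := by
  obtain ⟨p, hp, he, hs⟩ := mid (N := N) b.succ (Fin.succ_ne_zero b) (j.val + 1) (by omega)
    (i.val + 1) (by omega)
  have hr : (Sum.inr (x, i) : V s N) ≠ root := by simp [root]
  have had : (GV s N).Adj (Sum.inr (x, i)) (Sum.inl (0, ⟨i.val + 1, by omega⟩)) := adj_par _ hr
  refine ⟨_, _, .cons had p, ?_, ?_⟩
  · refine hp.cons ?_
    intro h
    rcases hs _ h with ⟨k, hk, h⟩ | ⟨k, h⟩ <;> simp at h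
  · rw [SimpleGraph.Walk.edges_cons, List.map_cons, he]
    congr 1
    exact (g_par _ hr).symm

def word {s N : ℕ} (t : Fin s × Fin s × Fin s × Fin N × Fin N) : List (Fin (s + 1)) :=
  t.1.succ :: (List.replicate (t.2.2.2.1.val + 1) 0 ++
    t.2.1.succ :: (List.replicate (t.2.2.2.2.val + 1) 0 ++ [t.2.2.1.succ]))

theorem word_mem {s N : ℕ} (t : Fin s × Fin s × Fin s × Fin N × Fin N) :
    word t ∈ MAW (LV s N) := by
  obtain ⟨x, b, y, i, j⟩ := t
  refine ⟨?_, ?_, ?_, ?_⟩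
  · simp [word]; omega
  · have := absent (N := N) (x.succ :: List.replicate (i.val + 1) 0)
      (List.replicate (j.val + 1) 0 ++ [y.succ]) x.succ b.succ y.succ (Fin.succ_ne_zero _)
      (Fin.succ_ne_zero _) (Fin.succ_ne_zero _) (by simp) (by simp)
    simpa [word] using this
  · have := LV_reverse (present (N := N) y b j i)
    simpa only [word, List.tail_cons, List.reverse_cons, List.reverse_append,
      List.reverse_replicate, List.append_assoc, List.singleton_append, List.cons_append,
      List.nil_append] using this
  · have := present (N := N) x b i j
    have h2 : word (x, b, y, i, j) = (x.succ :: (List.replicate (i.val + 1) 0 ++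
      b.succ :: List.replicate (j.val + 1) 0)) ++ [y.succ] := by simp [word]
    rw [h2, List.dropLast_concat]
    exact this

theorem rep_inj {s : ℕ} (b c : Fin (s + 1)) (hb : b ≠ 0) (hc : c ≠ 0)
    (l l' : List (Fin (s + 1))) : ∀ i j : ℕ,
    List.replicate i 0 ++ b :: l = List.replicate j 0 ++ c :: l' → i = j ∧ b = c ∧ l = l' := by
  intro i
  induction i with
  | zero =>
    intro j h
    cases j with
    | zero => simpa using h
    | succ j => simp [List.replicate_succ] at h; exact absurd h.1 hb
  | succ i ih =>
    intro j h
    cases j with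
    | zero => simp [List.replicate_succ] at h; exact absurd h.1.symm hc
    | succ j =>
      simp only [List.replicate_succ, List.cons_append, List.cons.injEq, true_and] at h
      have := ih j h
      exact ⟨by omega, this.2⟩

theorem word_inj {s N : ℕ} : Function.Injective (word (s := s) (N := N)) := by
  rintro ⟨x, b, y, i, j⟩ ⟨x', b', y', i', j'⟩ h
  simp only [word, List.cons.injEq, Fin.succ_inj] at h
  obtain ⟨rfl, h⟩ := h
  obtain ⟨h1, h2, h⟩ := rep_inj _ _ (Fin.succ_ne_zero _) (Fin.succ_ne_zero _) _ _ _ _ h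
  obtain ⟨h3, h4, -⟩ := rep_inj _ _ (Fin.succ_ne_zero _) (Fin.succ_ne_zero _) _ _ _ _ h
  have e1 : i = i' := by ext; omega
  have e2 : j = j' := by ext; omega
  rw [Fin.succ_inj] at h2 h4
  subst h2 h4 e1 e2
  rfl

theorem maw_finite (s N : ℕ) : (MAW (LV s N)).Finite := by
  apply (List.finite_length_le (Fin (s + 1)) (Fintype.card (V s N) + 1)).subset
  rintro l ⟨-, -, -, u, v, p, hp, he⟩
  have := hp.length_lt
  have h2 := congrArg List.length he
  simp at h2
  simp only [Set.mem_setOf_eq]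
  omega

theorem maw_card (s N : ℕ) : s ^ 3 * N ^ 2 ≤ (MAW (LV s N)).ncard := by
  have h1 : Set.range (word (s := s) (N := N)) ⊆ MAW (LV s N) := by
    rintro _ ⟨t, rfl⟩; exact word_mem t
  have h2 := Set.ncard_le_ncard h1 (maw_finite s N)
  rw [← Set.image_univ, Set.ncard_image_of_injective _ word_inj, Set.ncard_univ] at h2
  simp at h2
  calc s ^ 3 * N ^ 2 = s * (s * (s * (N * N))) := by ring
    _ ≤ _ := h2

end MawTree

open MawTree in
theorem maw_unrooted_tree_lower_bound (s N : ℕ) (hs : 1 ≤ s) (hN : 1 ≤ N) :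
    ∃ G : SimpleGraph (Fin ((N + 1) * (s + 1) + s * N)), ∃ _ : G.IsTree,
      ∃ f : G.edgeSet → Fin (s + 1),
        s ^ 3 * N ^ 2 ≤ (MAW (pathLang G f)).ncard := by
  have hc : Fintype.card (Fin ((N + 1) * (s + 1) + s * N)) = Fintype.card (V s N) := by
    simp; ring
  let e := Fintype.equivOfCardEq hc
  let φ : (GV s N).comap e ≃g GV s N := SimpleGraph.Iso.comap e (GV s N)
  refine ⟨(GV s N).comap e, φ.isTree_iff.2 (tree s N),
    fun x => g (x.1.map e), ?_⟩
  have hL : pathLang ((GV s N).comap e) (fun x => g (x.1.map e)) = LV s N := by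
    have hl : ∀ {u v} (p : ((GV s N).comap e).Walk u v),
        p.darts.map (fun d => g (d.edge.map e)) = (p.map φ.toHom).edges.map g := by
      intro u v p
      rw [SimpleGraph.Walk.edges_map, SimpleGraph.Walk.edges, List.map_map, List.map_map]
      rfl
    ext l
    constructor
    · rintro ⟨u, v, p, hp, rfl⟩
      exact ⟨_, _, p.map φ.toHom, SimpleGraph.Walk.map_isPath_of_injective φ.injective hp, hl p⟩
    · rintro ⟨u, v, p, hp, rfl⟩
      refine ⟨_, _, p.map φ.symm.toHom,
        SimpleGraph.Walk.map_isPath_of_injective φ.symm.injective hp, ?_⟩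
      have := hl (p.map φ.symm.toHom)
      refine Eq.trans ?_ this.symm
      rw [SimpleGraph.Walk.edges_map, SimpleGraph.Walk.edges_map, List.map_map, List.map_map]
      apply List.map_congr_left
      intro a _
      induction a with
      | _ a b =>
      simp
  rw [hL]
  exact maw_card s N
end
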